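/- Let X be a real N×D matrix with N ≥ 1, and let α, β > 0. Define Λ = β·XᵀX + α·I and Σ = (1/N)·(XᵀX + (α/β)·I). Then Λ and Σ are positive definite (hence invertible), Λ = βN·Σ, and for every x* ∈ ℝ^D, β⁻¹ + x*ᵀΛ⁻¹x* = 1/β + (2/(βN))·E(x*), where E(x*) = ½·x*ᵀΣ⁻¹x*. -/

import Mathlib

/-! The posterior precision `Λ` is the multiple `βN • S` of the regularized covariance `S`, and
inverting a matrix inverts scalar factors, so the quadratic forms of `Λ⁻¹` and `S⁻¹` differ by the
factor `(βN)⁻¹`. Positive definiteness comes from the ridge term: adding a positive multiple of the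
identity to a positive semidefinite matrix makes it positive definite. -/

open Matrix

theorem posDef_add_smul_one {n R A : Type*} [DecidableEq n]
    [Ring R] [PartialOrder R] [StarRing R] [StarOrderedRing R] [NoZeroDivisors R]
    [CommSemiring A] [PartialOrder A] [StarRing A] [StarOrderedRing A]
    [Algebra A R] [StarModule A R] [PosSMulStrictMono A R]
    {G : Matrix n n R} (hG : G.PosSemidef) {a : A} (ha : 0 < a) :
    (G + a • (1 : Matrix n n R)).PosDef := by
  nontriviality R
  exact .posSemidef_add hG (PosDef.one.smul ha)

section Covariance

variable {n K : Type*} [DecidableEq n] [Field K]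

/-- The precision matrix of the posterior over the weights of a Bayesian linear regression with
prior precision `α`, noise precision `β` and Gram matrix `G`; the design matrix `X` of the data
enters only through `G = XᵀX`. -/
def posteriorPrecision (α β : K) (G : Matrix n n K) : Matrix n n K :=
  β • G + α • 1

/-- The MAP estimate of the input covariance from a Gram matrix `G`, with sample size `N` and ridge
parameter `γ`. The sample size is a scalar, not tied to the number of rows of a design matrix. -/
def mapCovariance (N γ : K) (G : Matrix n n K) : Matrix n n K :=
  N⁻¹ • (G + γ • 1)

theorem posteriorPrecision_eq_smul_mapCovariance (α : K) {β N : K} (hβ : β ≠ 0) (hN : N ≠ 0)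
    (G : Matrix n n K) :
    posteriorPrecision α β G = (β * N) • mapCovariance N (α / β) G := by
  unfold posteriorPrecision mapCovariance
  match_scalars <;> field_simp

theorem posDef_mapCovariance [PartialOrder K] [StarRing K] [StarOrderedRing K]
    [PosMulReflectLT K] {N γ : K} (hN : 0 < N) (hγ : 0 < γ) {G : Matrix n n K}
    (hG : G.PosSemidef) : (mapCovariance N γ G).PosDef :=
  (posDef_add_smul_one hG hγ).smul (inv_pos.2 hN)

end Covariance

section Energy

variable {n K : Type*} [Fintype n] [DecidableEq n] [Field K]

theorem nonsing_inv_smul (k : K) (A : Matrix n n K) : (k • A)⁻¹ = k⁻¹ • A⁻¹ := by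
  obtain rfl | hk := eq_or_ne k 0
  · simp
  by_cases hA : IsUnit A.det
  · exact inv_smul' A (Units.mk0 k hk) hA
  · have hkA : ¬IsUnit (k • A).det := by
      simpa [det_smul, hk] using hA
    rw [nonsing_inv_apply_not_isUnit _ hA, nonsing_inv_apply_not_isUnit _ hkA, smul_zero]

variable [StarRing K]

/-- The energy function of a centred Gaussian with covariance `S`, that is, its negative log
density up to an additive constant. The `star` is trivial over `ℝ`; over `ℂ` it makes the quadratic
form Hermitian, and the normalization `1 / 2` is that of the real case. -/
noncomputable def gaussianEnergy (S : Matrix n n K) (x : n → K) : K :=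
  1 / 2 * (star x ⬝ᵥ S⁻¹ *ᵥ x)

/-- The variance of the posterior predictive distribution at the input `x`, for noise precision `β`
and posterior precision matrix `Λ`. -/
noncomputable def predictiveVariance (β : K) (Λ : Matrix n n K) (x : n → K) : K :=
  β⁻¹ + star x ⬝ᵥ Λ⁻¹ *ᵥ x

theorem gaussianEnergy_smul (k : K) (S : Matrix n n K) (x : n → K) :
    gaussianEnergy (k • S) x = k⁻¹ * gaussianEnergy S x := by
  simp only [gaussianEnergy, nonsing_inv_smul, smul_mulVec, dotProduct_smul, smul_eq_mul]
  ring

theorem predictiveVariance_eq_inv_add_two_mul_gaussianEnergy [NeZero (2 : K)] (β : K)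
    (Λ : Matrix n n K) (x : n → K) :
    predictiveVariance β Λ x = β⁻¹ + 2 * gaussianEnergy Λ x := by
  simp [predictiveVariance, gaussianEnergy, two_ne_zero]

theorem predictiveVariance_smul [NeZero (2 : K)] (β k : K) (S : Matrix n n K) (x : n → K) :
    predictiveVariance β (k • S) x = 1 / β + 2 / k * gaussianEnergy S x := by
  rw [predictiveVariance_eq_inv_add_two_mul_gaussianEnergy, gaussianEnergy_smul]
  ring

theorem predictive_variance_eq_affine_energy_general [PartialOrder K] [StarOrderedRing K]
    [PosMulReflectLT K] {α β N : K} (hα : 0 < α) (hβ : 0 < β) (hN : 0 < N)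
    {G : Matrix n n K} (hG : G.PosSemidef) :
    (posteriorPrecision α β G).PosDef ∧ (mapCovariance N (α / β) G).PosDef ∧
    posteriorPrecision α β G = (β * N) • mapCovariance N (α / β) G ∧
    ∀ x : n → K, predictiveVariance β (posteriorPrecision α β G) x =
      1 / β + 2 / (β * N) * gaussianEnergy (mapCovariance N (α / β) G) x := by
  have hS : (mapCovariance N (α / β) G).PosDef := posDef_mapCovariance hN (div_pos hα hβ) hG
  have hΛS := posteriorPrecision_eq_smul_mapCovariance α hβ.ne' hN.ne' G
  refine ⟨hΛS ▸ hS.smul (mul_pos hβ hN), hS, hΛS, fun x => ?_⟩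
  have : NeZero (2 : K) := ⟨two_pos.ne'⟩
  rw [hΛS, predictiveVariance_smul]

end Energy

/-- With `Λ = β·XᵀX + α·I` and `Σ = (1/N)·(XᵀX + (α/β)·I)` (`N ≥ 1`,
`α, β > 0`), both matrices are positive definite, `Λ = βN·Σ`, and the Bayesian
predictive variance is an affine function of the Gaussian energy `E(x*) = ½·x*ᵀΣ⁻¹x*`:
`β⁻¹ + x*ᵀΛ⁻¹x* = 1/β + (2/(βN))·E(x*)`. -/
theorem predictive_variance_eq_affine_energy
    {N D : ℕ} (hN : 1 ≤ N) (X : Matrix (Fin N) (Fin D) ℝ)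
    (α β : ℝ) (hα : 0 < α) (hβ : 0 < β)
    (Λ S : Matrix (Fin D) (Fin D) ℝ)
    (hΛ : Λ = β • (Xᵀ * X) + α • (1 : Matrix (Fin D) (Fin D) ℝ))
    (hS : S = (1 / (N : ℝ)) • (Xᵀ * X + (α / β) • (1 : Matrix (Fin D) (Fin D) ℝ)))
    (E : (Fin D → ℝ) → ℝ) (hE : ∀ x, E x = (1 / 2) * (x ⬝ᵥ S⁻¹.mulVec x)) :
    Λ.PosDef ∧ S.PosDef ∧ Λ = (β * N) • S ∧
    ∀ xstar : Fin D → ℝ,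
      β⁻¹ + xstar ⬝ᵥ Λ⁻¹.mulVec xstar = 1 / β + (2 / (β * N)) * E xstar := by
  obtain rfl : E = gaussianEnergy S := funext hE
  simpa [hΛ, hS, posteriorPrecision, mapCovariance, predictiveVariance] using
    predictive_variance_eq_affine_energy_general hα hβ (Nat.cast_pos.2 hN)
      (posSemidef_conjTranspose_mul_self X)
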